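/- arXiv:1311.2835 — 2 statements merged into one kernel-verified Lean document; each statement's English description precedes it below -/
import Mathlib

section
/- Let H be a virtually polycyclic group (i.e., H has a polycyclic subgroup of finite index). Then H contains only finitely many conjugacy classes of finite subgroups. -/
/-- A group is polycyclic if it admits a subnormal series with cyclic factors. -/
def IsPolycyclic (G : Type*) [Group G] : Prop :=
  ∃ (n : ℕ) (s : Fin (n + 1) → Subgroup G),
    s 0 = ⊥ ∧ s (Fin.last n) = ⊤ ∧
    ∀ i : Fin n, s i.castSucc ≤ s i.succ ∧
      ∃ _ : ((s i.castSucc).subgroupOf (s i.succ)).Normal,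
        IsCyclic (↥(s i.succ) ⧸ (s i.castSucc).subgroupOf (s i.succ))

/-- A group is virtually polycyclic if it has a polycyclic subgroup of finite index. -/
def IsVirtuallyPolycyclic (G : Type*) [Group G] : Prop :=
  ∃ H : Subgroup G, IsPolycyclic H ∧ H.FiniteIndex

namespace VPC

theorem fg_map {G G' : Type*} [Group G] [Group G'] (f : G →* G') {A : Subgroup G} (h : A.FG) :
    (A.map f).FG := by
  rw [Subgroup.fg_iff] at h ⊢
  obtain ⟨S, rfl, hS⟩ := h
  exact ⟨f '' S, (MonoidHom.map_closure f S).symm, hS.image f⟩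

theorem fg_of_map {G G' : Type*} [Group G] [Group G'] (f : G →* G') (hf : Function.Injective f)
    {A : Subgroup G} (h : (A.map f).FG) : A.FG := by
  rw [← Group.fg_iff_subgroup_fg] at h ⊢
  exact Group.fg_of_surjective (f := (A.equivMapOfInjective f hf).symm.toMonoidHom)
    (A.equivMapOfInjective f hf).symm.surjective

theorem finite_subgroups_subset {G : Type*} [Group G] {S : Set G} (hS : S.Finite) :
    {K : Subgroup G | (K : Set G) ⊆ S}.Finite := by
  refine Set.Finite.of_finite_image (f := fun K : Subgroup G => (K : Set G)) ?_
    (SetLike.coe_injective.injOn)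
  refine hS.finite_subsets.subset ?_
  rintro _ ⟨K, hK, rfl⟩
  exact hK

theorem finite_of_pow {A : Type*} [CommGroup A] (hA : ∀ L : Subgroup A, L.FG) (L : Subgroup A)
    (hL : ∀ x ∈ L, ∃ n : ℕ, 0 < n ∧ x ^ n = 1) : Finite L := by
  have : Group.FG L := (Group.fg_iff_subgroup_fg L).2 (hA L)
  apply CommGroup.finite_of_fg_isMulTorsion
  rintro ⟨x, hx⟩
  obtain ⟨n, hn, h⟩ := hL x hx
  exact isOfFinOrder_iff_pow_eq_one.2 ⟨n, hn, Subtype.ext h⟩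

theorem finite_pow_eq {A : Type*} [CommGroup A] (hA : ∀ L : Subgroup A, L.FG) {m : ℕ} (hm : 0 < m)
    (y : A) : {a : A | a ^ m = y}.Finite := by
  have hk : Finite (powMonoidHom m : A →* A).ker := finite_of_pow hA _ (fun x hx => ⟨m, hm, hx⟩)
  by_cases h : ∃ a0 : A, a0 ^ m = y
  · obtain ⟨a0, rfl⟩ := h
    have : ((fun x => a0 * x) '' ((powMonoidHom m : A →* A).ker : Set A)).Finite :=
      Set.Finite.image _ (Set.toFinite _)
    refine this.subset ?_
    intro a ha
    refine ⟨a0⁻¹ * a, ?_, by simp⟩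
    simp only [Set.mem_ofPred_eq] at ha
    simp [MonoidHom.mem_ker, mul_pow, ha]
  · convert Set.finite_empty
    ext a
    simp only [Set.mem_ofPred_eq, Set.mem_empty_iff_false, iff_false]
    exact fun ha => h ⟨a, ha⟩

theorem finite_reps {A : Type*} [CommGroup A] (hA : ∀ L : Subgroup A, L.FG) {m : ℕ} (hm : 0 < m) :
    ∃ S : Set A, S.Finite ∧ ∀ c : A, ∃ b : A, ∃ r ∈ S, c = b ^ m * r := by
  have : Group.FG A := Group.fg_def.2 (hA ⊤)
  let P := (powMonoidHom m : A →* A).range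
  have : Finite (A ⧸ P) := by
    apply CommGroup.finite_of_fg_isMulTorsion
    intro x
    induction x using QuotientGroup.induction_on with
    | H x =>
      refine isOfFinOrder_iff_pow_eq_one.2 ⟨m, hm, ?_⟩
      rw [← QuotientGroup.mk_pow, QuotientGroup.eq_one_iff]
      exact ⟨x, rfl⟩
  refine ⟨Set.range (fun q : A ⧸ P => q.out), Set.finite_range _, fun c => ?_⟩
  have h : (QuotientGroup.mk ((QuotientGroup.mk c : A ⧸ P).out) : A ⧸ P) = QuotientGroup.mk c :=
    Quotient.out_eq _
  rw [QuotientGroup.eq] at h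
  obtain ⟨b, hb⟩ := h
  refine ⟨b, _, ⟨QuotientGroup.mk c, rfl⟩, ?_⟩
  simp only [powMonoidHom_apply] at hb
  rw [hb, mul_comm, mul_inv_cancel_left]

/-- Key lemma: finite subgroups with a given image modulo a noetherian abelian normal subgroup. -/
theorem key {H Q A : Type*} [Group H] [Group Q] [CommGroup A] (ι : A →* H)
    (hι : Function.Injective ι) (act : H → A →* A)
    (hact : ∀ h a, ι (act h a) = h⁻¹ * ι a * h) (π : H →* Q) (hπ : π.ker = ι.range)
    (hsurj : Function.Surjective π)
    (hA : ∀ L : Subgroup A, L.FG) (J : Subgroup Q) [Finite J] :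
    ∃ S : Set H, S.Finite ∧ ∀ K : Subgroup H, (K : Set H).Finite → K.map π = J →
      ∃ b : A, ∀ x ∈ K, ι b * x * (ι b)⁻¹ ∈ S := by
  classical
  have := Fintype.ofFinite J
  have hT : Finite (CommGroup.torsion A) := finite_of_pow hA _ (fun x hx =>
    isOfFinOrder_iff_pow_eq_one.1 hx)
  obtain ⟨e, he, hte⟩ : ∃ e : ℕ, 0 < e ∧ ∀ t : A, IsOfFinOrder t → t ^ e = 1 := by
    refine ⟨Nat.card (CommGroup.torsion A), Nat.card_pos, fun t ht => ?_⟩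
    have := pow_card_eq_one' (x := (⟨t, ht⟩ : CommGroup.torsion A))
    exact congrArg Subtype.val this
  have lift : ∀ x y : H, π x = π y → ∃ a : A, x = y * ι a := by
    intro x y hxy
    have : y⁻¹ * x ∈ ι.range := by
      rw [← hπ, MonoidHom.mem_ker]; simp [hxy]
    obtain ⟨a, ha⟩ := this
    exact ⟨a, by rw [ha]; group⟩
  have comm : ∀ (a : A) (h : H), ι a * h = h * ι (act h a) := by
    intro a h; rw [hact]; group
  choose σ hσ using fun j : J => hsurj j
  choose f hf using fun i j : J => lift (σ i * σ j) (σ (i * j)) (by simp [hσ])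
  obtain ⟨n, hn, hn0⟩ : ∃ n, n = Fintype.card J ∧ 0 < n := ⟨_, rfl, Fintype.card_pos⟩
  obtain ⟨R, hR, hreps⟩ := finite_reps hA hn0
  let F : J → A := fun j => ∏ i, f i j
  refine ⟨⋃ j : J, ⋃ r ∈ R, (fun a => σ j * ι a) ''
    {a : A | a ^ (e * n) = r ^ e * (act (σ j) r ^ e)⁻¹ * (F j ^ e)⁻¹}, ?_, ?_⟩
  · refine Set.finite_iUnion fun j => hR.biUnion fun r _ => Set.Finite.image _ ?_
    exact finite_pow_eq hA (Nat.mul_pos he hn0) _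
  intro K hK hKJ
  have tors : ∀ t : A, ι t ∈ K → t ^ e = 1 := by
    intro t ht
    apply hte
    have : Finite K := hK
    obtain ⟨n, hn, h1⟩ := isOfFinOrder_iff_pow_eq_one.1 (isOfFinOrder_of_finite (⟨ι t, ht⟩ : K))
    refine isOfFinOrder_iff_pow_eq_one.2 ⟨n, hn, hι ?_⟩
    rw [map_pow, map_one]
    exact congrArg Subtype.val h1
  have : ∀ j : J, ∃ c : A, σ j * ι c ∈ K := by
    intro j
    have hj : (j : Q) ∈ K.map π := hKJ ▸ j.2
    obtain ⟨k, hk, hkj⟩ := hj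
    obtain ⟨a, ha⟩ := lift k (σ j) (by rw [hσ, hkj])
    exact ⟨a, ha ▸ hk⟩
  choose c hc using this
  -- the cocycle identity
  have coc : ∀ i j, f i j ^ e * act (σ j) (c i) ^ e * c j ^ e = c (i * j) ^ e := by
    intro i j
    have h1 : σ i * ι (c i) * (σ j * ι (c j)) =
        σ (i * j) * ι (f i j * act (σ j) (c i) * c j) := by
      calc _ = σ i * (ι (c i) * σ j) * ι (c j) := by group
        _ = (σ i * σ j) * ι (act (σ j) (c i)) * ι (c j) := by rw [comm]; group
        _ = _ := by rw [hf]; simp [mul_assoc]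
    have h2 : ι ((c (i * j))⁻¹ * (f i j * act (σ j) (c i) * c j)) ∈ K := by
      have : ι ((c (i * j))⁻¹ * (f i j * act (σ j) (c i) * c j)) =
        (σ (i * j) * ι (c (i * j)))⁻¹ * (σ i * ι (c i) * (σ j * ι (c j))) := by
        rw [h1]; simp [mul_assoc]
      rw [this]
      exact K.mul_mem (K.inv_mem (hc _)) (K.mul_mem (hc _) (hc _))
    have h3 := tors _ h2
    rw [mul_pow, inv_pow, inv_mul_eq_one, mul_pow, mul_pow] at h3
    exact h3.symm
  obtain ⟨C, hC⟩ : ∃ C, C = ∏ i, c i := ⟨_, rfl⟩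
  have sum : ∀ j, F j ^ e * act (σ j) C ^ e * c j ^ (e * n) = C ^ e := by
    intro j
    have h1 : ∏ i, (f i j ^ e * act (σ j) (c i) ^ e * c j ^ e) = ∏ i, c (i * j) ^ e :=
      Finset.prod_congr rfl fun i _ => coc i j
    rw [Fintype.prod_equiv (Equiv.mulRight j) (fun i => c (i * j) ^ e) (fun i => c i ^ e)
      (fun i => rfl)] at h1
    rw [Finset.prod_mul_distrib, Finset.prod_mul_distrib, Finset.prod_pow, Finset.prod_pow,
      Finset.prod_pow, Finset.prod_pow, ← map_prod, ← hC, Finset.prod_const, Finset.card_univ, ← hn,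
      ← pow_mul, mul_comm n e] at h1
    exact h1
  obtain ⟨b, r, hr, hbr⟩ := hreps C
  refine ⟨b, fun x hx => ?_⟩
  have hxJ : π x ∈ J := hKJ ▸ ⟨x, hx, rfl⟩
  obtain ⟨j, hj⟩ : ∃ j : J, (j : Q) = π x := ⟨⟨_, hxJ⟩, rfl⟩
  obtain ⟨a, rfl⟩ := lift x (σ j) (by rw [hσ, hj])
  have hac : a ^ e = c j ^ e := by
    have : ι ((c j)⁻¹ * a) ∈ K := by
      have h : ι ((c j)⁻¹ * a) = (σ j * ι (c j))⁻¹ * (σ j * ι a) := by simp [mul_assoc]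
      rw [h]
      exact K.mul_mem (K.inv_mem (hc _)) hx
    have h3 := tors _ this
    rw [mul_pow, inv_pow, inv_mul_eq_one] at h3
    exact h3.symm
  have hs := sum j
  simp only [Set.mem_iUnion]
  refine ⟨j, r, hr, act (σ j) b * a * b⁻¹, ?_, ?_⟩
  · simp only [Set.mem_ofPred_eq]
    have e1 : a ^ (e * n) = C ^ e * (act (σ j) C ^ e)⁻¹ * (F j ^ e)⁻¹ := by
      rw [← hs, pow_mul, hac, ← pow_mul]
      generalize F j ^ e = u
      generalize act (σ j) C ^ e = v
      generalize c j ^ (e * n) = w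
      apply Additive.ofMul.injective
      simp only [ofMul_mul, ofMul_inv]
      abel
    rw [mul_pow, mul_pow, e1, hbr, inv_pow, map_mul, map_pow, mul_pow, mul_pow, ← pow_mul,
      ← pow_mul, mul_comm n e]
    generalize F j ^ e = u
    generalize b ^ (e * n) = v
    generalize act (σ j) b ^ (e * n) = w
    generalize act (σ j) r ^ e = x
    generalize r ^ e = y
    apply Additive.ofMul.injective
    simp only [ofMul_mul, ofMul_inv]
    abel
  · simp only [map_mul, map_inv]
    rw [← mul_assoc (ι b), comm b (σ j)]
    simp [mul_assoc]

/-- Finitely many conjugacy classes of finite subgroups. -/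
def FinCl (H : Type*) [Group H] : Prop :=
  ∃ R : Set (Subgroup H), R.Finite ∧ ∀ K : Subgroup H, (K : Set H).Finite →
      ∃ h : H, K.map (MulAut.conj h).toMonoidHom ∈ R

theorem finCl_ext {H : Type*} [Group H] (A : Subgroup H) [A.Normal]
    (hcomm : ∀ x ∈ A, ∀ y ∈ A, x * y = y * x) (hA : ∀ L ≤ A, L.FG) (hQ : FinCl (H ⧸ A)) :
    FinCl H := by
  classical
  letI : CommGroup A := { (inferInstance : Group A) with
    mul_comm := fun x y => Subtype.ext (hcomm x x.2 y y.2) }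
  obtain ⟨R, hR, hRK⟩ := hQ
  have key' : ∀ J : Subgroup (H ⧸ A), (J : Set (H ⧸ A)).Finite →
      ∃ S : Set H, S.Finite ∧ ∀ K : Subgroup H, (K : Set H).Finite →
      K.map (QuotientGroup.mk' A) = J →
      ∃ b : A, ∀ x ∈ K, A.subtype b * x * (A.subtype b)⁻¹ ∈ S := by
    intro J hJ
    have : Finite J := hJ
    refine key (A := A) A.subtype A.subtype_injective
      (fun h => (MulAut.conjNormal h⁻¹ : MulAut A).toMonoidHom) ?_ (QuotientGroup.mk' A) ?_
      (QuotientGroup.mk'_surjective A) ?_ J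
    · intro h a
      simp
    · simp
    · intro L
      refine fg_of_map A.subtype A.subtype_injective (hA _ ?_)
      rintro _ ⟨x, -, rfl⟩
      exact x.2
  have key'' : ∀ J : Subgroup (H ⧸ A), 
      ∃ S : Set H, S.Finite ∧ ∀ K : Subgroup H, (K : Set H).Finite →
      K.map (QuotientGroup.mk' A) = J →
      ∃ b : A, ∀ x ∈ K, A.subtype b * x * (A.subtype b)⁻¹ ∈ S := by
    intro J
    by_cases hJ : (J : Set (H ⧸ A)).Finite
    · exact key' J hJ
    · refine ⟨∅, Set.finite_empty, fun K hK h => (hJ ?_).elim⟩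
      rw [← h]
      exact hK.image _
  choose S hS hSK using key''
  refine ⟨⋃ J ∈ R, {K : Subgroup H | (K : Set H) ⊆ S J},
    hR.biUnion fun J _ => finite_subgroups_subset (hS J), fun K hK => ?_⟩
  obtain ⟨q, hq⟩ := hRK (K.map (QuotientGroup.mk' A)) (hK.image _)
  obtain ⟨h, rfl⟩ := QuotientGroup.mk'_surjective A q
  have e1 : (K.map (MulAut.conj h).toMonoidHom).map (QuotientGroup.mk' A) =
      (K.map (QuotientGroup.mk' A)).map (MulAut.conj (QuotientGroup.mk' A h)).toMonoidHom := by
    rw [Subgroup.map_map, Subgroup.map_map]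
    congr 1
  obtain ⟨b, hb⟩ := hSK _ (K.map (MulAut.conj h).toMonoidHom) (hK.image _) e1
  refine ⟨b * h, ?_⟩
  simp only [Set.mem_iUnion]
  refine ⟨_, hq, ?_⟩
  rintro _ ⟨x, hx, rfl⟩
  have := hb (h * x * h⁻¹) ⟨x, hx, by simp⟩
  convert this using 1
  simp [mul_assoc]

theorem finCl_main.{u} (d : ℕ) : ∀ (H : Type u) [Group H] (N : Subgroup H) [N.Normal] [N.FiniteIndex],
    derivedSeries N d = ⊥ → (∀ L ≤ N, L.FG) → FinCl H := by
  induction d with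
  | zero =>
    intro H _ N _ _ hN _
    have : Finite H := by
      have h1 : N = ⊥ := by
        rw [derivedSeries_zero] at hN
        rw [eq_bot_iff]
        intro x hx
        have : (⟨x, hx⟩ : N) ∈ (⊥ : Subgroup N) := hN ▸ Subgroup.mem_top _
        exact congrArg Subtype.val (Subgroup.mem_bot.1 this)
      have h2 : (⊥ : Subgroup H).FiniteIndex := h1 ▸ inferInstance
      have h3 : (⊥ : Subgroup H).index ≠ 0 := h2.index_ne_zero
      rw [Subgroup.index_bot] at h3
      exact (Nat.card_ne_zero.1 h3).2
    exact ⟨Set.univ, Set.toFinite _, fun K _ => ⟨1, Set.mem_univ _⟩⟩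
  | succ d ih =>
    intro H _ N _ _ hN hfg
    let A : Subgroup H := (derivedSeries N d).map N.subtype
    have hAN : A ≤ N := by rintro _ ⟨x, -, rfl⟩; exact x.2
    have hnorm : A.Normal := inferInstanceAs ((derivedSeries N d).map N.subtype).Normal
    refine finCl_ext A ?_ (fun L hL => hfg L (hL.trans hAN)) ?_
    · rintro _ ⟨x, hx, rfl⟩ _ ⟨y, hy, rfl⟩
      have := Subgroup.commutator_mem_commutator hx hy
      rw [← derivedSeries_succ] at this
      rw [hN, Subgroup.mem_bot, commutatorElement_eq_one_iff_mul_comm] at this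
      exact congrArg Subtype.val this
    · let π := QuotientGroup.mk' A
      have hπ : Function.Surjective π := QuotientGroup.mk'_surjective A
      have : (N.map π).Normal := Subgroup.Normal.map inferInstance π hπ
      have : (N.map π).FiniteIndex := by
        constructor
        intro h
        have := Subgroup.index_map_dvd N hπ
        rw [h, zero_dvd_iff] at this
        exact Subgroup.FiniteIndex.index_ne_zero this
      refine ih (H ⧸ A) (N.map π) ?_ ?_
      · rw [← map_derivedSeries_eq (π.subgroupMap_surjective N), eq_bot_iff]
        rintro _ ⟨x, hx, rfl⟩
        rw [Subgroup.mem_bot]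
        apply Subtype.ext
        exact (QuotientGroup.eq_one_iff (N := A) (x : H)).2 ⟨x, hx, rfl⟩
      · intro L hL
        rw [← Subgroup.map_comap_eq_self_of_surjective hπ L]
        apply fg_map
        apply hfg
        intro x hx
        obtain ⟨y, hy, hyx⟩ := hL hx
        have : y⁻¹ * x ∈ A := QuotientGroup.eq.1 hyx
        have := N.mul_mem hy (hAN this)
        simpa using this

theorem fg_step {G : Type*} [Group G] {M M' : Subgroup G}
    (hn : (M.subgroupOf M').Normal) (hc : IsCyclic (M' ⧸ M.subgroupOf M'))
    (hM : ∀ L ≤ M, L.FG) : ∀ L ≤ M', L.FG := by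
  intro L hL
  let q := (QuotientGroup.mk' (M.subgroupOf M')).comp (Subgroup.inclusion hL)
  obtain ⟨⟨_, ⟨x, rfl⟩⟩, hg⟩ := IsCyclic.exists_generator (α := q.range)
  have : L = (L ⊓ M) ⊔ Subgroup.zpowers (x : G) := by
    apply le_antisymm
    · intro y hy
      obtain ⟨k, hk⟩ := hg ⟨q ⟨y, hy⟩, ⟨_, rfl⟩⟩
      have hk' : q (x ^ k) = q ⟨y, hy⟩ := by
        rw [map_zpow]; exact congrArg Subtype.val hk
      have hm : (Subgroup.inclusion hL (x ^ k))⁻¹ * Subgroup.inclusion hL ⟨y, hy⟩ ∈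
        M.subgroupOf M' := QuotientGroup.eq.1 hk'
      rw [Subgroup.mem_subgroupOf] at hm
      have hm' : ((x : G) ^ k)⁻¹ * y ∈ M := by simpa using hm
      have hl : ((x : G) ^ k)⁻¹ * y ∈ L := L.mul_mem (L.inv_mem (L.zpow_mem x.2 k)) hy
      have := Subgroup.mul_mem _
        (Subgroup.mem_sup_right (S := L ⊓ M) (Subgroup.zpow_mem_zpowers (x : G) k))
        (Subgroup.mem_sup_left (T := Subgroup.zpowers (x : G)) ⟨hl, hm'⟩)
      simpa using this
    · exact sup_le inf_le_left (by simp)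
  rw [this]
  refine (hM _ inf_le_right).sup ?_
  rw [Subgroup.fg_iff]
  exact ⟨{(x : G)}, (Subgroup.zpowers_eq_closure _).symm, Set.finite_singleton _⟩

theorem solv_step {G : Type*} [Group G] {M M' : Subgroup G} (h : M ≤ M')
    (hn : (M.subgroupOf M').Normal) (hc : IsCyclic (M' ⧸ M.subgroupOf M'))
    (hM : Group.IsSolvable M) : Group.IsSolvable M' := by
  letI := IsCyclic.commGroup (α := M' ⧸ M.subgroupOf M')
  have : Group.IsSolvable (M' ⧸ M.subgroupOf M') := Group.isSolvable_of_comm (fun a b => mul_comm a b)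
  refine Group.isSolvable_of_ker_le_range (Subgroup.inclusion h)
    (QuotientGroup.mk' (M.subgroupOf M')) ?_
  rw [QuotientGroup.ker_mk']
  rintro x hx
  exact ⟨⟨x, hx⟩, rfl⟩

theorem polycyclic_prop {G : Type*} [Group G] (hG : IsPolycyclic G) :
    Group.IsSolvable G ∧ ∀ L : Subgroup G, L.FG := by
  obtain ⟨n, s, h0, hl, hs⟩ := hG
  have : ∀ i, Group.IsSolvable (s i) ∧ ∀ L ≤ s i, L.FG := by
    intro i
    induction i using Fin.induction with
    | zero =>
      rw [h0]
      refine ⟨inferInstance, fun L hL => ?_⟩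
      rw [le_bot_iff.1 hL]
      exact Subgroup.FG.bot
    | succ i ih =>
      obtain ⟨h1, h2, h3⟩ := hs i
      exact ⟨solv_step h1 h2 h3 ih.1, fg_step h2 h3 ih.2⟩
  have := this (Fin.last n)
  rw [hl] at this
  refine ⟨?_, fun L => this.2 L le_top⟩
  have := this.1
  exact Group.isSolvable_of_surjective (f := (Subgroup.topEquiv (G := G)).toMonoidHom)
    Subgroup.topEquiv.surjective

end VPC

/-- A virtually polycyclic group contains only finitely many conjugacy classes of
finite subgroups. -/
theorem finitely_many_conjugacy_classes_of_finite_subgroups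
    (H : Type*) [Group H] (hH : IsVirtuallyPolycyclic H) :
    ∃ R : Finset (Subgroup H), ∀ K : Subgroup H, (K : Set H).Finite →
      ∃ J ∈ R, ∃ h : H, K.map (MulAut.conj h).toMonoidHom = J := by
  obtain ⟨P, hP, hfi⟩ := hH
  obtain ⟨hsol, hfg⟩ := VPC.polycyclic_prop hP
  have hle := P.normalCore_le
  have : Group.IsSolvable P.normalCore :=
    Group.isSolvable_of_isSolvable_injective (f := Subgroup.inclusion hle) (Subgroup.inclusion_injective hle)
  obtain ⟨d, hd⟩ := (Group.isSolvable_def _).1 this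
  obtain ⟨R, hR, h⟩ := VPC.finCl_main d H P.normalCore hd (by
    intro L hL
    have h1 := VPC.fg_map P.subtype (hfg (L.subgroupOf P))
    rwa [Subgroup.map_subgroupOf_eq_of_le (hL.trans hle)] at h1)
  refine ⟨hR.toFinset, fun K hK => ?_⟩
  obtain ⟨g, hg⟩ := h K hK
  exact ⟨_, hR.mem_toFinset.2 hg, g, rfl⟩
end

section
/- Let A be a subgroup of a virtually polycyclic group H, and let C(A) denote the commensurator of A in H, i.e., the set of g ∈ H such that gAg⁻¹ ∩ A has finite index in both A and gAg⁻¹. If A₀ is the intersection of all conjugates gAg⁻¹ for g ∈ C(A), then A₀ has finite index in A and A₀ is normal in C(A). -/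
/-- The commensurator of a subgroup `A` of `H`: the set of `g` such that
`gAg⁻¹ ∩ A` has finite index in both `A` and `gAg⁻¹`. -/
def commensuratorSet {H : Type*} [Group H] (A : Subgroup H) : Set H :=
  {g : H | ((A ⊓ A.map (MulAut.conj g).toMonoidHom).subgroupOf A).FiniteIndex ∧
    ((A ⊓ A.map (MulAut.conj g).toMonoidHom).subgroupOf
      (A.map (MulAut.conj g).toMonoidHom)).FiniteIndex}

/-- All subgroups are finitely generated and separable. -/
def GoodGp (G : Type*) [Group G] : Prop :=
  ∀ A : Subgroup G, A.FG ∧ ∀ x : G, x ∉ A → ∃ K : Subgroup G, K.FiniteIndex ∧ A ≤ K ∧ x ∉ K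

theorem GoodGp.of_injective {G G' : Type*} [Group G] [Group G'] (f : G' →* G)
    (hf : Function.Injective f) (h : GoodGp G) : GoodGp G' := by
  intro A
  constructor
  · have h1 := (h (A.map f)).1
    rw [← Group.fg_iff_subgroup_fg] at h1 ⊢
    let e := A.equivMapOfInjective f hf
    exact Group.fg_of_surjective (f := e.symm.toMonoidHom) e.symm.surjective
  · intro x hx
    obtain ⟨K, hK, hAK, hxK⟩ := (h (A.map f)).2 (f x) (by
      rintro ⟨a, ha, e⟩
      exact hx (hf e ▸ ha))
    refine ⟨K.comap f, ?_, ?_, hxK⟩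
    · rw [Subgroup.finiteIndex_iff, Subgroup.index_comap]
      have : K.IsFiniteRelIndex f.range := Subgroup.isFiniteRelIndex_of_finiteIndex
      exact Subgroup.relIndex_ne_zero
    · exact Subgroup.map_le_iff_le_comap.1 hAK

theorem finite_hom_of_fg {G P : Type*} [Group G] [Group P] [Finite P] (hG : Group.FG G) :
    Finite (G →* P) := by
  obtain ⟨S, hS, hfin⟩ := Group.fg_iff.1 hG
  have := hfin.to_subtype
  refine Finite.of_injective (fun (f : G →* P) (s : S) => f s) ?_
  intro f g hfg
  refine MonoidHom.eq_of_eqOn_dense hS ?_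
  intro s hs
  exact congrFun hfg ⟨s, hs⟩

theorem exists_char {N : Type*} [Group N] (hN : Group.FG N) (K : Subgroup N) [K.FiniteIndex] :
    ∃ N' : Subgroup N, N'.Characteristic ∧ N'.FiniteIndex ∧ N' ≤ K := by
  have := finite_hom_of_fg (P := Equiv.Perm (N ⧸ K)) hN
  refine ⟨⨅ f : N →* Equiv.Perm (N ⧸ K), f.ker, ?_, ?_, ?_⟩
  · rw [Subgroup.characteristic_iff_le_comap]
    intro φ x hx
    simp only [Subgroup.mem_comap, Subgroup.mem_iInf, MonoidHom.mem_ker] at hx ⊢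
    intro f
    exact hx (f.comp φ.toMonoidHom)
  · exact Subgroup.finiteIndex_iInf fun f => inferInstance
  · refine (iInf_le _ (MulAction.toPermHom N (N ⧸ K))).trans ?_
    rw [← Subgroup.normalCore_eq_ker]
    exact Subgroup.normalCore_le K

theorem exists_pow_stab {N : Type*} [Group N] (hN : Group.FG N) (K : Subgroup N) [K.FiniteIndex]
    (φ : MulAut N) : ∃ k : ℤ, k ≠ 0 ∧ ∀ x, (φ ^ k) x ∈ K ↔ x ∈ K := by
  have := finite_hom_of_fg (P := Equiv.Perm (N ⧸ K)) hN
  let ρ := MulAction.toPermHom N (N ⧸ K)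
  obtain ⟨i, j, hij, he⟩ := Finite.exists_ne_map_eq_of_infinite
    (fun i : ℤ => ρ.comp (φ ^ i).toMonoidHom)
  have key : ∀ x, ρ x ((1 : N) : N ⧸ K) = ((1 : N) : N ⧸ K) ↔ x ∈ K := by
    intro x
    change (x • ((1 : N) : N ⧸ K)) = _ ↔ _
    rw [MulAction.Quotient.smul_coe, smul_eq_mul, mul_one, eq_comm, QuotientGroup.eq]
    simp
  refine ⟨i - j, sub_ne_zero.2 hij, fun x => ?_⟩
  have h2 := DFunLike.congr_fun he ((φ ^ (-j)) x)
  have h3 : ρ ((φ ^ i) ((φ ^ (-j)) x)) = ρ ((φ ^ j) ((φ ^ (-j)) x)) := h2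
  rw [← MulAut.mul_apply, ← MulAut.mul_apply, ← zpow_add, ← zpow_add, add_neg_cancel, zpow_zero,
    ← sub_eq_add_neg] at h3
  rw [← key, h3, key]; rfl

theorem core_sep {G : Type*} [Group G] (N : Subgroup G) [hN : N.Normal] (hg : GoodGp N)
    (A : Subgroup G) (hA : (A ⊔ N).FiniteIndex) (x : G) (hx : x ∉ A) :
    ∃ K : Subgroup G, K.FiniteIndex ∧ A ≤ K ∧ x ∉ K := by
  by_cases hxN : x ∈ A ⊔ N
  swap
  · exact ⟨_, hA, le_sup_left, hxN⟩
  obtain ⟨a, ha, n, hn, rfl⟩ := Subgroup.mem_sup_of_normal_right.1 hxN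
  have hnA : n ∉ A := fun h => hx (A.mul_mem ha h)
  obtain ⟨K, hK, hAK, hnK⟩ := (hg (A.subgroupOf N)).2 ⟨n, hn⟩ (by simpa [Subgroup.mem_subgroupOf])
  have hfg : Group.FG N := ⟨(hg ⊤).1⟩
  obtain ⟨N', hc, hf, hle⟩ := exists_char hfg K
  let M := N'.map N.subtype
  have hM : M.Normal := inferInstance
  refine ⟨A ⊔ M, ?_, le_sup_left, ?_⟩
  · have hMN : M ≤ N := Subgroup.map_subtype_le _
    have h1 : M.relIndex N ≠ 0 := by
      have := hf.index_ne_zero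
      rwa [Subgroup.relIndex, show M.subgroupOf N = N' from by
        exact Subgroup.comap_map_eq_self_of_injective N.subtype_injective N']
    have h2 : (A ⊔ M).relIndex (A ⊔ N) ≠ 0 := by
      have e : A ⊔ N = N ⊔ (A ⊔ M) := by
        rw [sup_comm N, sup_assoc, sup_eq_right.2 hMN]
      have h4 : (A ⊔ M).relIndex N ≠ 0 := fun h =>
        h1 (Subgroup.relIndex_eq_zero_of_le_left le_sup_right h)
      rw [e]
      rw [Subgroup.relIndex, ← Subgroup.finiteIndex_iff, Subgroup.finiteIndex_iff_finite_quotient]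
      rw [Subgroup.relIndex, ← Subgroup.finiteIndex_iff] at h4
      have h5 : Finite (N ⧸ (A ⊔ M).subgroupOf N) := inferInstance
      let L : Subgroup G := N ⊔ (A ⊔ M)
      let F : N ⧸ (A ⊔ M).subgroupOf N → L ⧸ (A ⊔ M).subgroupOf L :=
        Subgroup.quotientSubgroupOfEmbeddingOfLE (s := N) (t := L) (A ⊔ M) le_sup_left
      refine Finite.of_surjective F ?_
      intro q
      induction q using QuotientGroup.induction_on with
      | H z =>
      obtain ⟨z, hz⟩ := z
      obtain ⟨n, hn, b, hb, rfl⟩ := Subgroup.mem_sup_of_normal_left.1 hz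
      refine ⟨((⟨n, hn⟩ : N) : N ⧸ _), ?_⟩
      refine QuotientGroup.eq.2 ?_
      simp only [Subgroup.mem_subgroupOf]
      change n⁻¹ * (n * b) ∈ A ⊔ M
      simpa using hb
    have h3 := Subgroup.relIndex_mul_index (sup_le_sup_left hMN A : A ⊔ M ≤ A ⊔ N)
    rw [Subgroup.finiteIndex_iff, ← h3]
    exact mul_ne_zero h2 hA.index_ne_zero
  · intro h
    have h' : n ∈ A ⊔ M := by
      have := (A ⊔ M).mul_mem ((A ⊔ M).inv_mem (le_sup_left (a := A) ha)) h
      simpa using this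
    obtain ⟨b, hb, m, hm, e⟩ := Subgroup.mem_sup_of_normal_right.1 h'
    obtain ⟨m', hm', rfl⟩ := hm
    have hbN : b ∈ N := by
      have : b = n * (N.subtype m')⁻¹ := by rw [← e]; group
      rw [this]; exact N.mul_mem hn (N.inv_mem m'.2)
    apply hnK
    have : (⟨n, hn⟩ : N) = ⟨b, hbN⟩ * m' := Subtype.ext e.symm
    rw [this]
    exact K.mul_mem (hAK (by simpa [Subgroup.mem_subgroupOf])) (hle hm')

theorem ext_fg {G : Type*} [Group G] (N : Subgroup G) [hN : N.Normal] (hg : GoodGp N)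
    (hQ : ∀ B : Subgroup (G ⧸ N), B.FG) (A : Subgroup G) : A.FG := by
  have h1 : (A ⊓ N).FG := by
    have h := (hg (A.subgroupOf N)).1
    rw [← Group.fg_iff_subgroup_fg] at h
    have := (Group.fg_iff_subgroup_fg _).1 (Group.fg_range (N.subtype.comp (A.subgroupOf N).subtype))
    convert this
    ext x
    simp [Subgroup.mem_subgroupOf]
  obtain ⟨S, hS, hfin⟩ := (Subgroup.fg_iff _).1 (hQ (A.map (QuotientGroup.mk' N)))
  have hl : ∀ s : S, ∃ a ∈ A, QuotientGroup.mk' N a = s := by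
    intro s
    have : (s : G ⧸ N) ∈ A.map (QuotientGroup.mk' N) := by
      rw [← hS]; exact Subgroup.subset_closure s.2
    exact this
  choose l hlA hl using hl
  have := hfin.to_subtype
  have h2 : (Subgroup.closure (Set.range l)).FG :=
    (Subgroup.fg_iff _).2 ⟨_, rfl, Set.finite_range l⟩
  have : A = (A ⊓ N) ⊔ Subgroup.closure (Set.range l) := by
    apply le_antisymm
    · intro a ha
      have h3 : QuotientGroup.mk' N a ∈ (Subgroup.closure (Set.range l)).map (QuotientGroup.mk' N) := by
        rw [MonoidHom.map_closure]
        have : (QuotientGroup.mk' N) '' Set.range l = S := by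
          ext y
          constructor
          · rintro ⟨_, ⟨s, rfl⟩, rfl⟩; rw [hl]; exact s.2
          · intro hy; exact ⟨_, ⟨⟨y, hy⟩, rfl⟩, hl _⟩
        rw [this, hS]
        exact ⟨a, ha, rfl⟩
      obtain ⟨c, hc, e⟩ := h3
      have hcA : c ∈ A := by
        refine (Subgroup.closure_le A).2 ?_ hc
        rintro _ ⟨s, rfl⟩; exact hlA s
      have : a = (a * c⁻¹) * c := by group
      rw [this]
      refine Subgroup.mul_mem_sup ⟨A.mul_mem ha (A.inv_mem hcA), ?_⟩ hc
      have e2 : QuotientGroup.mk' N (a * c⁻¹) = 1 := by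
        rw [map_mul, map_inv, e]; simp
      exact (QuotientGroup.eq_one_iff _).1 e2
    · refine sup_le inf_le_left ((Subgroup.closure_le A).2 ?_)
      rintro _ ⟨s, rfl⟩; exact hlA s
  rw [this]
  exact h1.sup h2

theorem good_finite {G : Type*} [Group G] (N : Subgroup G) [hN : N.Normal] (hg : GoodGp N)
    [hf : N.FiniteIndex] : GoodGp G := by
  intro A
  refine ⟨ext_fg N hg (fun B => ?_) A, fun x hx => core_sep N hg A ?_ x hx⟩
  · rw [← Group.fg_iff_subgroup_fg]; infer_instance
  · exact Subgroup.finiteIndex_of_le (le_sup_right : N ≤ A ⊔ N)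

theorem fin_of_zpow {G : Type*} [Group G] (N : Subgroup G) (t : G)
    (ht : ∀ g : G, ∃ i : ℤ, ∃ n ∈ N, g = t ^ i * n) (L : Subgroup G) (hL : N ≤ L)
    (k : ℤ) (hk : k ≠ 0) (htk : t ^ k ∈ L) : L.FiniteIndex := by
  rw [Subgroup.finiteIndex_iff_finite_quotient]
  have : Finite (Finset.Ico 0 |k|) := inferInstance
  refine Finite.of_surjective (fun i : Finset.Ico 0 |k| => ((t ^ (i : ℤ) : G) : G ⧸ L)) ?_
  intro q
  induction q using QuotientGroup.induction_on with
  | H g =>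
  obtain ⟨i, n, hn, rfl⟩ := ht g
  refine ⟨⟨i % k, Finset.mem_Ico.2 ⟨Int.emod_nonneg _ hk, Int.emod_lt_abs _ hk⟩⟩, ?_⟩
  refine QuotientGroup.eq.2 ?_
  have : (t ^ (i % k))⁻¹ * (t ^ i * n) = (t ^ k) ^ (i / k) * n := by
    rw [← mul_assoc, ← zpow_neg, ← zpow_add, ← zpow_mul]
    congr 2
    have := Int.emod_add_mul_ediv i k
    linarith
  rw [this]
  exact L.mul_mem (L.zpow_mem htk _) (hL hn)

theorem good_cyclic {G : Type*} [Group G] (N : Subgroup G) [hN : N.Normal] (hg : GoodGp N)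
    (hc : IsCyclic (G ⧸ N)) : GoodGp G := by
  intro A
  refine ⟨ext_fg N hg (fun B => ?_) A, fun x hx => ?_⟩
  · obtain ⟨b, hb⟩ := Subgroup.isCyclic_iff_exists_zpowers_eq_top B |>.1 inferInstance
    exact (Subgroup.fg_iff _).2 ⟨{b}, by rw [← hb, Subgroup.zpowers_eq_closure], Set.finite_singleton b⟩
  obtain ⟨t', ht'⟩ := hc.exists_generator
  obtain ⟨t, rfl⟩ := QuotientGroup.mk_surjective t'
  have ht : ∀ g : G, ∃ i : ℤ, ∃ n ∈ N, g = t ^ i * n := by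
    intro g
    obtain ⟨i, hi⟩ := ht' (g : G ⧸ N)
    refine ⟨i, (t ^ i)⁻¹ * g, ?_, by group⟩
    exact QuotientGroup.eq.1 hi
  by_cases h1 : ∃ k : ℤ, k ≠ 0 ∧ t ^ k ∈ A ⊔ N
  · obtain ⟨k, hk, htk⟩ := h1
    exact core_sep N hg A (fin_of_zpow N t ht _ le_sup_right k hk htk) x hx
  push Not at h1
  have hN0 : ∀ k : ℤ, t ^ k ∈ N → k = 0 := by
    intro k hk
    by_contra h
    exact h1 k h (le_sup_right (a := A) hk)
  have hAN : A ≤ N := by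
    intro a ha
    obtain ⟨i, n, hn, rfl⟩ := ht a
    have : t ^ i ∈ A ⊔ N := by
      have := (A ⊔ N).mul_mem (le_sup_left (b := N) ha) ((A ⊔ N).inv_mem (le_sup_right (a := A) hn))
      simpa using this
    have hi : i = 0 := by
      by_contra h
      exact h1 i h this
    simpa [hi] using hn
  by_cases hxN : x ∈ N
  · obtain ⟨K, hK, hAK, hxK⟩ := (hg (A.subgroupOf N)).2 ⟨x, hxN⟩ (by simpa [Subgroup.mem_subgroupOf])
    have hfg : Group.FG N := ⟨(hg ⊤).1⟩
    obtain ⟨k, hk, hst⟩ := exists_pow_stab hfg K (MulAut.conjNormal t)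
    rw [← map_zpow] at hst
    let M := K.map N.subtype
    have hnorm : Subgroup.zpowers (t ^ k) ≤ Subgroup.normalizer (M : Set G) := by
      rw [Subgroup.zpowers_le, Subgroup.mem_normalizer_iff]
      intro h
      constructor
      · rintro ⟨y, hy, rfl⟩
        refine ⟨MulAut.conjNormal (t ^ k) y, (hst y).2 hy, ?_⟩
        exact MulAut.conjNormal_apply _ _
      · rintro ⟨y, hy, e⟩
        refine ⟨MulAut.conjNormal (t ^ k)⁻¹ y, (hst _).1 ?_, ?_⟩
        · rw [← MulAut.mul_apply, ← map_mul]; simpa using hy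
        · change (MulAut.conjNormal (t ^ k)⁻¹ y : G) = h
          change (y : G) = _ at e
          rw [MulAut.conjNormal_apply, e]; group
    have hA1 : A ≤ M := by
      intro a ha
      exact ⟨⟨a, hAN ha⟩, hAK (by simpa [Subgroup.mem_subgroupOf]), rfl⟩
    have hx1 : x ∉ Subgroup.zpowers (t ^ k) ⊔ M := by
      intro h
      rw [← SetLike.mem_coe, Subgroup.coe_mul_of_left_le_normalizer_right _ _ hnorm] at h
      obtain ⟨_, ⟨j, rfl⟩, m, ⟨m', hm', rfl⟩, e⟩ := h
      simp only at e
      have e3 : (t ^ (k * j)) = x * (N.subtype m')⁻¹ := by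
        rw [← e, zpow_mul]; group
      have e2 : (t ^ (k * j)) ∈ N := by
        rw [e3]; exact N.mul_mem hxN (N.inv_mem m'.2)
      have e4 := hN0 _ e2
      rw [e4, zpow_zero, eq_comm, mul_inv_eq_one] at e3
      apply hxK
      have e6 : (⟨x, hxN⟩ : N) = m' := Subtype.ext e3
      rw [e6]; exact hm'
    obtain ⟨K2, h2, h3, h4⟩ := core_sep N hg (Subgroup.zpowers (t ^ k) ⊔ M)
      (fin_of_zpow N t ht _ le_sup_right k hk
        (Subgroup.mem_sup_left (Subgroup.mem_sup_left (Subgroup.mem_zpowers _)))) x hx1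
    exact ⟨K2, h2, (hA1.trans le_sup_right).trans h3, h4⟩
  · obtain ⟨i, n, hn, rfl⟩ := ht x
    have hi : i ≠ 0 := by
      rintro rfl
      exact hxN (by simpa using hn)
    refine ⟨Subgroup.zpowers (t ^ (2 * i)) ⊔ N,
      fin_of_zpow N t ht _ le_sup_right (2 * i) (by omega)
        (Subgroup.mem_sup_left (Subgroup.mem_zpowers _)), hAN.trans le_sup_right, ?_⟩
    intro h
    obtain ⟨_, ⟨j, rfl⟩, m, hm, e⟩ := Subgroup.mem_sup_of_normal_right.1 h
    simp only at e
    have e3 : t ^ (i - 2 * i * j) = t ^ (2 * i * j) * (m * n⁻¹) * (t ^ (2 * i * j))⁻¹ := by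
      have : t ^ i = t ^ (2 * i * j) * (m * n⁻¹) := by
        rw [zpow_mul, ← mul_assoc, e]; group
      rw [zpow_sub, this]
    have e2 : t ^ (i - 2 * i * j) ∈ N := by
      rw [e3]; exact hN.conj_mem _ (N.mul_mem hm (N.inv_mem hn)) _
    have e4 := hN0 _ e2
    have e5 : i * (1 - 2 * j) = 0 := by linarith
    rcases mul_eq_zero.1 e5 with h | h
    · exact hi h
    · omega

theorem good_polycyclic {G : Type*} [Group G] (h : IsPolycyclic G) : GoodGp G := by
  obtain ⟨n, s, h0, hl, hs⟩ := h
  have key : ∀ i : Fin (n + 1), GoodGp (s i) := by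
    intro i
    induction i using Fin.induction with
    | zero =>
      rw [h0]
      intro A
      refine ⟨?_, fun x hx => ?_⟩
      · rw [Subsingleton.elim A ⊥]; exact Subgroup.FG.bot
      · exact absurd (by rw [Subsingleton.elim x 1]; exact A.one_mem) hx
    | succ i ih =>
      obtain ⟨hle, hn, hcyc⟩ := hs i
      refine good_cyclic ((s i.castSucc).subgroupOf (s i.succ)) ?_ hcyc
      exact ih.of_injective (Subgroup.subgroupOfEquivOfLe hle).toMonoidHom
        (Subgroup.subgroupOfEquivOfLe hle).injective
  have := key (Fin.last n)
  rw [hl] at this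
  exact this.of_injective (Subgroup.topEquiv (G := G)).symm.toMonoidHom
    (Subgroup.topEquiv (G := G)).symm.injective

theorem good_virtually {G : Type*} [Group G] (h : IsVirtuallyPolycyclic G) : GoodGp G := by
  obtain ⟨P, hP, hf⟩ := h
  refine good_finite P.normalCore ?_
  exact (good_polycyclic hP).of_injective (Subgroup.inclusion P.normalCore_le)
    (Subgroup.inclusion_injective _)

theorem sep_conj {H : Type*} [Group H] (hg : GoodGp H) (A B : Subgroup H)
    (hB : (A.subgroupOf B).FiniteIndex) :
    ∃ K : Subgroup H, K.FiniteIndex ∧ A ≤ K ∧ K ⊓ B ≤ A := by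
  have : ∀ q : B ⧸ A.subgroupOf B, ∃ K : Subgroup H, K.FiniteIndex ∧ A ≤ K ∧
      ((q.out : H) ∈ K → (q.out : H) ∈ A) := by
    intro q
    by_cases h : (q.out : H) ∈ A
    · exact ⟨⊤, inferInstance, le_top, fun _ => h⟩
    · obtain ⟨K, h1, h2, h3⟩ := (hg A).2 _ h
      exact ⟨K, h1, h2, fun h => absurd h h3⟩
  choose K h1 h2 h3 using this
  refine ⟨⨅ q, K q, Subgroup.finiteIndex_iInf h1, le_iInf h2, ?_⟩
  rintro y ⟨hyK, hyB⟩
  let q : B ⧸ A.subgroupOf B := ((⟨y, hyB⟩ : B) : B ⧸ A.subgroupOf B)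
  have hq : (q.out)⁻¹ * ⟨y, hyB⟩ ∈ A.subgroupOf B := QuotientGroup.eq.1 (QuotientGroup.out_eq' q)
  have hq' : (q.out : H)⁻¹ * y ∈ A := by simpa [Subgroup.mem_subgroupOf] using hq
  have hyq : y ∈ K q := (Subgroup.mem_iInf.1 hyK) q
  have h4 : (q.out : H) ∈ K q := by
    have := (K q).mul_mem hyq ((K q).inv_mem (h2 q hq'))
    simpa using this
  have := A.mul_mem (h3 q h4) hq'
  simpa using this

open scoped Pointwise in
theorem commSet_eq {H : Type*} [Group H] (A : Subgroup H) :
    commensuratorSet A = (Subgroup.Commensurable.commensurator A : Set H) := by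
  ext g
  rw [SetLike.mem_coe, Subgroup.Commensurable.commensurator_mem_iff]
  have : ConjAct.toConjAct g • A = A.map (MulAut.conj g).toMonoidHom := by
    ext x; rfl
  rw [this]
  simp only [commensuratorSet, Set.mem_ofPred_eq, Subgroup.finiteIndex_iff, Subgroup.Commensurable]
  change (A ⊓ _).relIndex A ≠ 0 ∧ (A ⊓ _).relIndex _ ≠ 0 ↔ _
  rw [Subgroup.inf_relIndex_left, Subgroup.inf_relIndex_right]

theorem mem_conj_iff {H : Type*} [Group H] (A : Subgroup H) (g x : H) :
    x ∈ A.map (MulAut.conj g).toMonoidHom ↔ g⁻¹ * x * g ∈ A := by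
  constructor
  · rintro ⟨a, ha, rfl⟩
    simpa [mul_assoc] using ha
  · intro h
    exact ⟨_, h, by simp [mul_assoc]⟩

theorem inf_of_commensurator_conjugates
    (H : Type*) [Group H] (hH : IsVirtuallyPolycyclic H) (A : Subgroup H)
    (A₀ : Subgroup H)
    (hA₀ : A₀ = ⨅ g ∈ commensuratorSet A, A.map (MulAut.conj g).toMonoidHom) :
    A₀ ≤ A ∧ (A₀.subgroupOf A).FiniteIndex ∧
      ∀ g ∈ commensuratorSet A, ∀ x ∈ A₀, g * x * g⁻¹ ∈ A₀ := by
  have hg := good_virtually hH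
  have hset := commSet_eq A
  have hmem : ∀ x, x ∈ A₀ ↔ ∀ g ∈ Subgroup.Commensurable.commensurator A, g⁻¹ * x * g ∈ A := by
    intro x
    rw [hA₀, hset]
    simp only [Subgroup.mem_iInf, mem_conj_iff, SetLike.mem_coe]
  have hle : A₀ ≤ A := by
    intro x hx
    simpa using (hmem x).1 hx 1 (Subgroup.one_mem _)
  refine ⟨hle, ?_, ?_⟩
  · obtain ⟨S, hS, hfin⟩ := (Subgroup.fg_iff _).1 (hg (Subgroup.Commensurable.commensurator A)).1
    have hex : ∀ g ∈ Subgroup.Commensurable.commensurator A, ∃ K : Subgroup H, K.FiniteIndex ∧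
        A ≤ K ∧ K ⊓ A.map (MulAut.conj g).toMonoidHom ≤ A := by
      intro g hgm
      apply sep_conj hg
      rw [← SetLike.mem_coe, ← hset] at hgm
      have := hgm.2
      rwa [Subgroup.inf_subgroupOf_right] at this
    have hSC : ∀ s : S, (s : H) ∈ Subgroup.Commensurable.commensurator A := by
      intro s; rw [← hS]; exact Subgroup.subset_closure s.2
    choose K1 a1 b1 c1 using fun s : S => hex s (hSC s)
    choose K2 a2 b2 c2 using fun s : S => hex (s : H)⁻¹ (Subgroup.inv_mem _ (hSC s))
    have := hfin.to_subtype
    let K := (⨅ s, K1 s) ⊓ (⨅ s, K2 s)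
    have f1 := Subgroup.finiteIndex_iInf a1
    have f2 := Subgroup.finiteIndex_iInf a2
    have hK : K.FiniteIndex := inferInstanceAs ((⨅ s, K1 s) ⊓ (⨅ s, K2 s)).FiniteIndex
    let B := K.normalCore ⊓ A
    have hinv : ∀ g ∈ Subgroup.closure S, ∀ b, b ∈ B → g * b * g⁻¹ ∈ B ∧ g⁻¹ * b * g ∈ B := by
      intro g hgS
      induction hgS using Subgroup.closure_induction with
      | mem s hs =>
        rintro b ⟨hb1, hb2⟩
        have n1 : s * b * s⁻¹ ∈ K.normalCore := K.normalCore_normal.conj_mem _ hb1 _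
        have n2 : s⁻¹ * b * s ∈ K.normalCore := by
          simpa using K.normalCore_normal.conj_mem _ hb1 s⁻¹
        refine ⟨⟨n1, c1 ⟨s, hs⟩ ⟨?_, ?_⟩⟩, ⟨n2, c2 ⟨s, hs⟩ ⟨?_, ?_⟩⟩⟩
        · exact Subgroup.mem_iInf.1 (K.normalCore_le n1).1 _
        · exact (mem_conj_iff _ _ _).2 (by simpa [mul_assoc] using hb2)
        · exact Subgroup.mem_iInf.1 (K.normalCore_le n2).2 _
        · exact (mem_conj_iff _ _ _).2 (by simpa [mul_assoc] using hb2)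
      | one => intro b hb; simpa using hb
      | mul x y _ _ hx hy =>
        intro b hb
        have e1 := (hx _ (hy b hb).1).1
        have e2 := (hy _ (hx b hb).2).2
        simp only [mul_inv_rev, mul_assoc] at e1 e2 ⊢
        exact ⟨e1, e2⟩
      | inv x _ hx => intro b hb; simpa using (hx b hb).symm
    have hBA : B ≤ A₀ := by
      intro b hb
      rw [hmem]
      intro g hgm
      rw [← hS] at hgm
      exact (hinv g hgm b hb).2.2
    have hBf : (B.subgroupOf A).FiniteIndex := by
      simp only [B, Subgroup.inf_subgroupOf_right]
      infer_instance
    exact Subgroup.finiteIndex_of_le (Subgroup.subgroupOf_mono A hBA)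
  · intro g hgm x hx
    rw [hset, SetLike.mem_coe] at hgm
    rw [hmem] at hx ⊢
    intro h hh
    have := hx (g⁻¹ * h) (Subgroup.mul_mem _ (Subgroup.inv_mem _ hgm) hh)
    simpa [mul_assoc] using this
end
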